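/- arXiv:2309.13180 — 7 statements merged into one kernel-verified Lean document; each statement's English description precedes it below -/
import Mathlib

section
/- Let G be a finite simple graph with no isolated vertices and let Γ_fec ⊆ ℝ^E_{≥0} be the (convex) set of fractional edge covers of G. If γ is an extreme point of Γ_fec, then the subgraph of G whose edge set is the support supp(γ) = {e ∈ E : γ(e) > 0} contains no cycle of even length. -/
open Finset

noncomputable section
open scoped Classical

variable {V : Type*}

/-- The set of admissible densities for a family `Γ` of objects on the edge set of `G`.
Densities are elements of `ℝ^E_{≥0}`, modeled as nonnegative functions on `Sym2 V`
vanishing outside the edge set of `G`. `ρ` is admissible if `ℓ_ρ(γ) ≥ 1` for all `γ ∈ Γ`. -/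
def Adm [Fintype V] [DecidableEq V] (G : SimpleGraph V) (Γ : Set (Sym2 V → ℝ)) :
    Set (Sym2 V → ℝ) :=
  {ρ | (∀ e, 0 ≤ ρ e) ∧ (∀ e ∉ G.edgeSet, ρ e = 0) ∧
    ∀ γ ∈ Γ, 1 ≤ ∑ e ∈ G.edgeFinset, γ e * ρ e}

/-- The `p`-energy of a density `ρ` with edge weights `σ`: `Σ_e σ(e) ρ(e)^p`. -/
def energy [Fintype V] [DecidableEq V] (p : ℝ) (σ : Sym2 V → ℝ) (G : SimpleGraph V)
    (ρ : Sym2 V → ℝ) : ℝ :=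
  ∑ e ∈ G.edgeFinset, σ e * ρ e ^ p

/-- The `p`-modulus of a family `Γ` with edge weights `σ`:
the infimum of the `p`-energy over admissible densities. -/
def Modulus [Fintype V] [DecidableEq V] (p : ℝ) (σ : Sym2 V → ℝ) (G : SimpleGraph V)
    (Γ : Set (Sym2 V → ℝ)) : ℝ :=
  sInf (energy p σ G '' Adm G Γ)

/-- The unweighted 2-energy `Σ_e ρ(e)²`. -/
def energy2 [Fintype V] [DecidableEq V] (G : SimpleGraph V) (ρ : Sym2 V → ℝ) : ℝ :=
  ∑ e ∈ G.edgeFinset, ρ e ^ 2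

/-- The unweighted 2-modulus. -/
def Mod2 [Fintype V] [DecidableEq V] (G : SimpleGraph V) (Γ : Set (Sym2 V → ℝ)) : ℝ :=
  sInf (energy2 G '' Adm G Γ)

/-- `C` is an edge cover of `G`: a set of edges of `G` meeting every vertex. -/
def IsEdgeCover [Fintype V] [DecidableEq V] (G : SimpleGraph V) (C : Finset (Sym2 V)) : Prop :=
  ↑C ⊆ G.edgeSet ∧ ∀ v : V, ∃ e ∈ C, v ∈ e

/-- The family `Γ_ec` of indicator vectors of edge covers of `G`. -/
def Γec [Fintype V] [DecidableEq V] (G : SimpleGraph V) : Set (Sym2 V → ℝ) :=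
  {γ | ∃ C : Finset (Sym2 V), IsEdgeCover G C ∧ γ = fun e => if e ∈ C then 1 else 0}

/-- The family `Γ_fec` of fractional edge covers of `G`: nonnegative vectors on the edge
set with `Σ_{e ∈ δ(v)} γ(e) ≥ 1` at every vertex `v`. -/
def Γfec [Fintype V] [DecidableEq V] (G : SimpleGraph V) : Set (Sym2 V → ℝ) :=
  {γ | (∀ e, 0 ≤ γ e) ∧ (∀ e ∉ G.edgeSet, γ e = 0) ∧
    ∀ v : V, 1 ≤ ∑ e ∈ G.incidenceFinset v, γ e}

/-- The family `Γ_star` of indicator vectors of the stars `δ(v)`, `v ∈ V`. -/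
def Γstar [Fintype V] [DecidableEq V] (G : SimpleGraph V) : Set (Sym2 V → ℝ) :=
  {γ | ∃ v : V, γ = fun e => if e ∈ G.incidenceFinset v then 1 else 0}

/-- The subgraph of `G` whose edge set is the support `{e : γ(e) > 0}` of `γ`. -/
def suppGraph (G : SimpleGraph V) (γ : Sym2 V → ℝ) : SimpleGraph V where
  Adj u v := G.Adj u v ∧ 0 < γ s(u, v)
  symm := by
    constructor
    intro u v h
    refine ⟨h.1.symm, ?_⟩
    rw [Sym2.eq_swap]
    exact h.2
  loopless := ⟨fun v h => G.loopless.irrefl v h.1⟩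

/-!
Along a closed walk of even length, give the edges alternating signs `1, -1, 1, …`. The two edges
traversed at each visit of a vertex cancel, so the resulting vector `y` sums to zero over every star
`δ(v)`. If `γ` is positive on the walk, then `γ ± εy` are fractional edge covers for small `ε > 0`,
and `γ` is their midpoint; extremality forces `y = 0`. On a circuit no edge is repeated, so `y ≠ 0`.
-/

theorem eq_zero_of_mem_extremePoints_of_add_mem_of_sub_mem {𝕜 E : Type*} [Ring 𝕜] [LinearOrder 𝕜]
    [IsStrictOrderedRing 𝕜] [Invertible (2 : 𝕜)] [AddCommGroup E] [Module 𝕜 E]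
    {A : Set E} {x y : E} (hx : x ∈ A.extremePoints 𝕜) (hadd : x + y ∈ A) (hsub : x - y ∈ A) :
    y = 0 :=
  add_eq_left.mp (hx.2 hadd hsub (mem_openSegment_add_sub x y))

theorem exists_pos_forall_abs_mul_le {ι 𝕜 : Type*} [Finite ι] [Field 𝕜] [LinearOrder 𝕜]
    [IsStrictOrderedRing 𝕜] {f g : ι → 𝕜} (hf : ∀ i, 0 ≤ f i) (hfg : ∀ i, f i = 0 → g i = 0) :
    ∃ ε > 0, ∀ i, |ε * g i| ≤ f i := by
  obtain ⟨C, hC⟩ := Finite.exists_le fun i ↦ |g i| / f i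
  have hpos : 0 < max C 1 := zero_lt_one.trans_le (le_max_right C 1)
  refine ⟨(max C 1)⁻¹, inv_pos.mpr hpos, fun i ↦ ?_⟩
  rw [abs_mul, abs_of_pos (inv_pos.mpr hpos), inv_mul_le_iff₀ hpos]
  rcases (hf i).eq_or_lt' with hi | hi
  · simp [hi, hfg i hi]
  · exact (div_le_iff₀ hi).mp ((hC i).trans (le_max_left C 1))

section AlternatingIndicator

variable [DecidableEq V] {G : SimpleGraph V} {u v : V}

/-- The signed edge indicator `∑ᵢ (-1)ⁱ 1_{eᵢ}` of a walk with successive edges `e₀, e₁, …`,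
a vector indexed by all of `Sym2 V`. Repeated edges are counted with multiplicity. -/
def alternatingIndicator (R : Type*) [AddGroupWithOne R] :
    {u v : V} → G.Walk u v → Sym2 V → R
  | _, _, .nil => 0
  | u, _, .cons (v := x) _ p => Pi.single s(u, x) 1 - alternatingIndicator R p

theorem alternatingIndicator_of_notMem_edges {R : Type*} [AddGroupWithOne R] (p : G.Walk u v)
    {e : Sym2 V} (he : e ∉ p.edges) : alternatingIndicator R p e = 0 := by
  induction p with
  | nil => rfl
  | cons h p ih =>
    rw [SimpleGraph.Walk.edges_cons, List.mem_cons, not_or] at he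
    simp [alternatingIndicator, he.1, ih he.2]

theorem alternatingIndicator_ne_zero {R : Type*} [AddGroupWithOne R] [NeZero (1 : R)]
    {p : G.Walk u v} (hp : p.IsTrail) (hnil : ¬ p.Nil) : alternatingIndicator R p ≠ 0 := by
  cases p with
  | nil => exact absurd .nil hnil
  | @cons _ x _ h p =>
    have hfirst : s(u, x) ∉ p.edges := ((SimpleGraph.Walk.isTrail_cons h p).mp hp).2
    refine Function.ne_iff.mpr ⟨s(u, x), ?_⟩
    simp [alternatingIndicator, alternatingIndicator_of_notMem_edges p hfirst]

theorem sum_incidenceFinset_single {M : Type*} [AddCommMonoid M] (h : G.Adj u v) (a : M) (w : V)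
    [Fintype (G.neighborSet w)] :
    ∑ e ∈ G.incidenceFinset w, (Pi.single s(u, v) a : Sym2 V → M) e =
      (Pi.single u a : V → M) w + (Pi.single v a : V → M) w := by
  have hmem : s(u, v) ∈ G.incidenceFinset w ↔ w = u ∨ w = v := by
    simp [G.mk'_mem_incidenceSet_iff, h]
  rw [Finset.sum_pi_single']
  have := h.ne
  grind

/-- Telescoping: an interior vertex of the walk receives opposite signs from the edges by which
the walk enters and leaves it, so only the endpoints contribute. -/
theorem sum_incidenceFinset_alternatingIndicator {R : Type*} [Ring R] (p : G.Walk u v) (w : V)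
    [Fintype (G.neighborSet w)] :
    ∑ e ∈ G.incidenceFinset w, alternatingIndicator R p e =
      (Pi.single u 1 : V → R) w - (-1) ^ p.length * (Pi.single v 1 : V → R) w := by
  induction p with
  | nil => simp [alternatingIndicator]
  | cons h p ih =>
    simp only [alternatingIndicator, Pi.sub_apply, Finset.sum_sub_distrib, ih,
      sum_incidenceFinset_single h, SimpleGraph.Walk.length_cons, pow_succ', neg_mul, one_mul]
    abel

theorem sum_incidenceFinset_alternatingIndicator_of_even {R : Type*} [Ring R] {c : G.Walk v v}
    (hc : Even c.length) (w : V) [Fintype (G.neighborSet w)] :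
    ∑ e ∈ G.incidenceFinset w, alternatingIndicator R c e = 0 := by
  rw [sum_incidenceFinset_alternatingIndicator, hc.neg_one_pow, one_mul, sub_self]

end AlternatingIndicator

theorem suppGraph_le (G : SimpleGraph V) (γ : Sym2 V → ℝ) : suppGraph G γ ≤ G :=
  fun _ _ h ↦ h.1

theorem pos_of_mem_edgeSet_suppGraph {G : SimpleGraph V} {γ : Sym2 V → ℝ} {e : Sym2 V}
    (he : e ∈ (suppGraph G γ).edgeSet) : 0 < γ e := by
  induction e with
  | _ a b => exact he.2

section FractionalEdgeCover

variable [Fintype V] [DecidableEq V] {G : SimpleGraph V} {γ : Sym2 V → ℝ}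

theorem add_mem_Γfec {y : Sym2 V → ℝ} (hγ : γ ∈ Γfec G) (hle : ∀ e, |y e| ≤ γ e)
    (hsum : ∀ v, ∑ e ∈ G.incidenceFinset v, y e = 0) : γ + y ∈ Γfec G := by
  obtain ⟨-, hzero, hcover⟩ := hγ
  refine ⟨fun e ↦ ?_, fun e he ↦ ?_, fun v ↦ ?_⟩
  · exact neg_le_iff_add_nonneg'.mp (abs_le.mp (hle e)).1
  · have hy : y e = 0 := abs_nonpos_iff.mp ((hle e).trans_eq (hzero e he))
    simp [hzero e he, hy]
  · simpa [Finset.sum_add_distrib, hsum v] using hcover v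

theorem eq_zero_of_mem_extremePoints_Γfec {y : Sym2 V → ℝ} (hγ : γ ∈ (Γfec G).extremePoints ℝ)
    (hsupp : ∀ e, γ e = 0 → y e = 0) (hsum : ∀ v, ∑ e ∈ G.incidenceFinset v, y e = 0) :
    y = 0 := by
  obtain ⟨ε, hε, hle⟩ := exists_pos_forall_abs_mul_le hγ.1.1 hsupp
  have hsum' (v : V) : ∑ e ∈ G.incidenceFinset v, (ε • y) e = 0 := by
    simp [← Finset.mul_sum, hsum v]
  have hadd : γ + ε • y ∈ Γfec G := add_mem_Γfec hγ.1 hle hsum'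
  have hsub : γ - ε • y ∈ Γfec G := by
    rw [sub_eq_add_neg]
    exact add_mem_Γfec hγ.1 (by simpa using hle) (by simpa using hsum')
  have hzero : ε • y = 0 := eq_zero_of_mem_extremePoints_of_add_mem_of_sub_mem hγ hadd hsub
  exact (smul_eq_zero_iff_right hε.ne').mp hzero

theorem alternatingIndicator_eq_zero_of_mem_extremePoints_Γfec
    (hγ : γ ∈ (Γfec G).extremePoints ℝ) {v : V} {c : G.Walk v v} (hc : Even c.length)
    (hpos : ∀ e ∈ c.edges, 0 < γ e) : alternatingIndicator ℝ c = 0 :=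
  eq_zero_of_mem_extremePoints_Γfec hγ
    (fun e he ↦ alternatingIndicator_of_notMem_edges c fun hmem ↦ (hpos e hmem).ne' he)
    (fun w ↦ sum_incidenceFinset_alternatingIndicator_of_even hc w)

theorem extremePoint_no_even_cycle_general (hγ : γ ∈ (Γfec G).extremePoints ℝ) :
    ¬ ∃ (v : V) (c : (suppGraph G γ).Walk v v), c.IsCircuit ∧ Even c.length := by
  rintro ⟨v, c, hcircuit, heven⟩
  let c' : G.Walk v v := c.mapLe (suppGraph_le G γ)
  have hcircuit' : c'.IsCircuit := hcircuit.mapLe (suppGraph_le G γ)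
  have heven' : Even c'.length := by simpa [c'] using heven
  have hpos : ∀ e ∈ c'.edges, 0 < γ e := fun e he ↦
    pos_of_mem_edgeSet_suppGraph (c.edges_subset_edgeSet (by simpa [c'] using he))
  exact alternatingIndicator_ne_zero hcircuit'.isTrail hcircuit'.not_nil
    (alternatingIndicator_eq_zero_of_mem_extremePoints_Γfec hγ heven' hpos)

end FractionalEdgeCover

/-- If `γ` is an extreme point of the set of fractional edge covers, then the subgraph
of `G` whose edge set is the support of `γ` contains no cycle of even length. -/
theorem extremePoint_no_even_cycle [Fintype V] [DecidableEq V] (G : SimpleGraph V)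
    (hiso : ∀ v : V, ∃ u, G.Adj v u) (γ : Sym2 V → ℝ)
    (hγ : γ ∈ (Γfec G).extremePoints ℝ) :
    ¬ ∃ (v : V) (c : (suppGraph G γ).Walk v v), c.IsCycle ∧ Even c.length :=
  fun ⟨v, c, hcycle, heven⟩ ↦
    extremePoint_no_even_cycle_general hγ ⟨v, c, hcycle.isCircuit, heven⟩
end
end

section
/- Let C be a cycle graph with k ≥ 3 vertices and k edges, and let γ be a minimal edge cover of C (an edge cover such that no proper subset of γ is an edge cover). Then |γ| ≤ 2k/3, i.e., 3|γ| ≤ 2k. -/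
open Finset

noncomputable section
open scoped Classical

variable {V : Type*}

/-! In a minimal edge cover every edge `e` has an endpoint `f e` covered by no other edge, since
otherwise `e` could be removed. The other endpoint of `e` is not of the form `f e'`: it is covered
by `e`, which would force `e' = e`. So every edge has an endpoint among the `|V| - |C|` vertices
outside the image of `f`, and each of these lies on at most `Δ` edges, where `Δ` bounds the degrees.
Hence `|C| ≤ Δ (|V| - |C|)`; on a cycle `Δ = 2`. -/

/-- `v` is a private vertex of `e` with respect to the edge set `C`: an endpoint of `e` lying on no
other edge of `C`. These are the vertices left uncovered when `e` is removed from an edge cover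
`C`. The edge `e` itself is not required to belong to `C`. -/
def IsPrivateVertex (C : Finset (Sym2 V)) (e : Sym2 V) (v : V) : Prop :=
  v ∈ e ∧ ∀ e' ∈ C, v ∈ e' → e' = e

section PrivateVertex

variable {C : Finset (Sym2 V)} {e : Sym2 V} {f : Sym2 V → V}

theorem injOn_of_forall_isPrivateVertex (hf : ∀ e ∈ C, IsPrivateVertex C e (f e)) :
    Set.InjOn f C := fun e he e' he' hee' =>
  (hf e' he').2 e he (hee' ▸ (hf e he).1)

variable [DecidableEq V]

theorem exists_mem_notMem_image_of_forall_isPrivateVertex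
    (hf : ∀ e ∈ C, IsPrivateVertex C e (f e)) (he : e ∈ C) (hdiag : ¬ e.IsDiag) :
    ∃ w ∈ e, w ∉ C.image f := by
  have hfe : f e ∈ e := (hf e he).1
  refine ⟨Sym2.Mem.other hfe, Sym2.other_mem hfe, fun hmem => ?_⟩
  obtain ⟨e', he', hother⟩ := mem_image.1 hmem
  obtain rfl : e = e' := (hf e' he').2 e he (hother ▸ Sym2.other_mem hfe)
  exact Sym2.other_ne hdiag hfe hother.symm

theorem add_one_mul_card_le_mul_card_of_forall_isPrivateVertex [Fintype V] {Δ : ℕ}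
    (hdiag : ∀ e ∈ C, ¬ e.IsDiag) (hΔ : ∀ v, #{e ∈ C | v ∈ e} ≤ Δ)
    (hpriv : ∀ e ∈ C, ∃ v, IsPrivateVertex C e v) :
    (Δ + 1) * #C ≤ Δ * Fintype.card V := by
  obtain rfl | ⟨e₀, -⟩ := C.eq_empty_or_nonempty
  · simp
  have : Nonempty V := ⟨e₀.out.1⟩
  choose! f hf using hpriv
  have hcount : #C * 1 ≤ #(C.image f)ᶜ * Δ := by
    refine card_mul_le_card_mul (fun e v => v ∈ e) (fun e he => card_pos.2 ?_) fun v _ => hΔ v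
    obtain ⟨w, hwe, hw⟩ := exists_mem_notMem_image_of_forall_isPrivateVertex hf he (hdiag e he)
    exact ⟨w, (mem_bipartiteAbove _).2 ⟨mem_compl.2 hw, hwe⟩⟩
  have hcard : #C + #(C.image f)ᶜ = Fintype.card V := by
    rw [← card_image_of_injOn (injOn_of_forall_isPrivateVertex hf), card_add_card_compl]
  calc (Δ + 1) * #C = Δ * #C + #C * 1 := by ring
    _ ≤ Δ * #C + #(C.image f)ᶜ * Δ := by gcongr
    _ = Δ * Fintype.card V := by rw [← hcard]; ring

end PrivateVertex

theorem card_filter_mem_le_degree [DecidableEq V] {G : SimpleGraph V} {C : Finset (Sym2 V)}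
    (hC : ↑C ⊆ G.edgeSet) (v : V) [Fintype (G.neighborSet v)] :
    #{e ∈ C | v ∈ e} ≤ G.degree v := by
  rw [← G.card_incidenceFinset_eq_degree]
  refine card_le_card fun e he => ?_
  obtain ⟨heC, hve⟩ := mem_filter.1 he
  exact (G.mem_incidenceFinset v e).2 ⟨hC heC, hve⟩

theorem IsEdgeCover.exists_isPrivateVertex [Fintype V] [DecidableEq V] {G : SimpleGraph V}
    {C : Finset (Sym2 V)} {e : Sym2 V} (hC : IsEdgeCover G C)
    (he : ¬ IsEdgeCover G (C.erase e)) : ∃ v, IsPrivateVertex C e v := by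
  have hsub : ↑(C.erase e) ⊆ G.edgeSet := (coe_subset.2 (erase_subset e C)).trans hC.1
  obtain ⟨v, hv⟩ : ∃ v, ∀ e' ∈ C.erase e, v ∉ e' := by
    by_contra! hcover
    exact he ⟨hsub, hcover⟩
  have hunique : ∀ e' ∈ C, v ∈ e' → e' = e := fun e' he' hve' => by
    by_contra hne
    exact hv e' (mem_erase.2 ⟨hne, he'⟩) hve'
  obtain ⟨e', he', hve'⟩ := hC.2 v
  exact ⟨v, hunique e' he' hve' ▸ hve', hunique⟩

theorem minimal_edgeCover_cycle_card_le_general [Fintype V] [DecidableEq V] {G : SimpleGraph V}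
    [DecidableRel G.Adj] {Δ : ℕ} (hdeg : ∀ v, G.degree v ≤ Δ) {C : Finset (Sym2 V)}
    (hC : Minimal (IsEdgeCover G) C) : (Δ + 1) * #C ≤ Δ * Fintype.card V :=
  add_one_mul_card_le_mul_card_of_forall_isPrivateVertex
    (fun _ he => G.not_isDiag_of_mem_edgeSet (hC.prop.1 he))
    (fun v => (card_filter_mem_le_degree hC.prop.1 v).trans (hdeg v))
    fun _ he => hC.prop.exists_isPrivateVertex (hC.not_prop_of_lt (erase_ssubset he))

/-- A minimal edge cover `C` of a cycle with `k` vertices satisfies `|C| ≤ 2k/3`. -/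
theorem minimal_edgeCover_cycle_card_le [Fintype V] [DecidableEq V] (G : SimpleGraph V)
    [DecidableRel G.Adj] (k : ℕ) (hk : 3 ≤ k) (hcard : Fintype.card V = k)
    (hconn : G.Connected) (hdeg : ∀ v : V, G.degree v = 2)
    (C : Finset (Sym2 V)) (hC : IsEdgeCover G C)
    (hmin : ∀ C' : Finset (Sym2 V), C' ⊂ C → ¬ IsEdgeCover G C') :
    3 * C.card ≤ 2 * k := by
  subst hcard
  exact minimal_edgeCover_cycle_card_le_general (fun v => (hdeg v).le)
    (minimal_iff_forall_lt.2 ⟨hC, hmin⟩)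
end
end

section
/- Let C be the edge set of a cycle in a graph, let Γ_ec(C) be the (nonempty, finite) set of edge covers of the cycle C, and let ρ : C → ℝ_{≥0}. Then (1/2)·Σ_{e∈C} ρ(e) ≥ (3/4)·min_{γ∈Γ_ec(C)} ℓ_ρ(γ), where ℓ_ρ(γ) = Σ_{e∈γ} ρ(e). -/
open Finset

noncomputable section
open scoped Classical

variable {V : Type*}

/-! Colour the edges with three colours so that every vertex of degree at least two sees at least
two colours. Such a colouring is built one edge at a time: a new edge `s(u, w)` only has to avoid
the colour of one earlier edge at `u` and of one earlier edge at `w`. Deleting any one colour class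
then leaves an edge cover. Each edge lies in exactly two of the three covers so obtained, so their
lengths add up to twice the total length. -/

/-- `c` uses at least two colours around every vertex lying on at least two edges of `S`. This
weakening of a proper edge colouring, unlike properness, is attainable with three colours whatever
the degrees. -/
def NoMonochromaticStar {κ : Type*} (S : Set (Sym2 V)) (c : Sym2 V → κ) : Prop :=
  ∀ v, {e ∈ S | v ∈ e}.Nontrivial → (c '' {e ∈ S | v ∈ e}).Nontrivial

section EdgeColoring

variable {κ : Type*} {S : Set (Sym2 V)} {c : Sym2 V → κ}

theorem NoMonochromaticStar.update (hc : NoMonochromaticStar S c) {e : Sym2 V} (he : e ∉ S) {k : κ}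
    (hk : ∀ v ∈ e, {f ∈ S | v ∈ f}.Nonempty → ∃ f ∈ S, v ∈ f ∧ c f ≠ k) :
    NoMonochromaticStar (insert e S) (Function.update c e k) := by
  have update_eq : ∀ f ∈ S, Function.update c e k f = c f := fun f hf =>
    Function.update_of_ne (ne_of_mem_of_not_mem hf he) k c
  intro v hv
  by_cases hve : v ∈ e
  · obtain ⟨g, ⟨hg, hvg⟩, hge⟩ := hv.exists_ne e
    obtain ⟨f, hf, hvf, hfk⟩ := hk v hve ⟨g, hg.resolve_left hge, hvg⟩
    refine ⟨_, ⟨f, ⟨Or.inr hf, hvf⟩, update_eq f hf⟩,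
      _, ⟨e, ⟨Or.inl rfl, hve⟩, Function.update_self e k c⟩, hfk⟩
  · have star_eq : {f ∈ insert e S | v ∈ f} = {f ∈ S | v ∈ f} := by grind
    rw [star_eq] at hv ⊢
    rw [Set.image_congr fun f hf => update_eq f hf.1]
    exact hc v hv

theorem exists_noMonochromaticStar (hκ : 3 ≤ Cardinal.mk κ) (hS : S.Finite) :
    ∃ c : Sym2 V → κ, NoMonochromaticStar S c := by
  obtain ⟨k₀⟩ : Nonempty κ := Cardinal.mk_ne_zero_iff.1 (three_pos.trans_le hκ).ne'
  induction S, hS using Set.Finite.induction_on with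
  | empty => exact ⟨fun _ => k₀, fun v hv => by simp at hv⟩
  | @insert e S he _ ih =>
    obtain ⟨c, hc⟩ := ih
    have exists_forbidden : ∀ v, ∃ a, {f ∈ S | v ∈ f}.Nonempty → ∃ f ∈ S, v ∈ f ∧ c f = a := by
      intro v
      by_cases hv : {f ∈ S | v ∈ f}.Nonempty
      · obtain ⟨f, hf, hvf⟩ := hv
        exact ⟨c f, fun _ => ⟨f, hf, hvf, rfl⟩⟩
      · exact ⟨k₀, fun h => absurd h hv⟩
    choose a ha using exists_forbidden
    induction e with | _ u w =>
    obtain ⟨k, hku, hkw⟩ := Cardinal.exists_ne_ne_of_three_le hκ (a u) (a w)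
    refine ⟨_, hc.update he (k := k) fun v hv hstar => ?_⟩
    obtain ⟨f, hf, hvf, hfa⟩ := ha v hstar
    have hkv : k ≠ a v := by
      rcases Sym2.mem_iff.1 hv with rfl | rfl
      exacts [hku, hkw]
    exact ⟨f, hf, hvf, hfa ▸ hkv.symm⟩

end EdgeColoring

theorem nontrivial_incidenceSet_iff (G : SimpleGraph V) (v : V) [Fintype (G.neighborSet v)] :
    (G.incidenceSet v).Nontrivial ↔ 2 ≤ G.degree v := by
  rw [← G.coe_incidenceFinset v, ← Finset.Nontrivial, ← Finset.one_lt_card_iff_nontrivial,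
    G.card_incidenceFinset_eq_degree, Nat.succ_le_iff]

theorem sum_sum_filter_ne {ι κ M : Type*} [Fintype κ] [DecidableEq κ] [AddCommMonoid M]
    (s : Finset ι) (c : ι → κ) (f : ι → M) :
    ∑ k, ∑ i ∈ s with c i ≠ k, f i = (Fintype.card κ - 1) • ∑ i ∈ s, f i := by
  calc ∑ k, ∑ i ∈ s with c i ≠ k, f i
      = ∑ i ∈ s, ∑ k with c i ≠ k, f i := by
        simp only [sum_filter]
        exact sum_comm
    _ = ∑ i ∈ s, (Fintype.card κ - 1) • f i := by
        simp only [sum_const, filter_ne, card_erase_of_mem, mem_univ, card_univ]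
    _ = (Fintype.card κ - 1) • ∑ i ∈ s, f i := (smul_sum ..).symm

section EdgeCover

variable [Fintype V] [DecidableEq V] {G : SimpleGraph V}

theorem NoMonochromaticStar.isEdgeCover_filter_ne {κ : Type*} [DecidableEq κ]
    [Fintype G.edgeSet] {c : Sym2 V → κ} (hc : NoMonochromaticStar G.edgeSet c)
    (hG : ∀ v, (G.incidenceSet v).Nontrivial) (k : κ) :
    IsEdgeCover G {e ∈ G.edgeFinset | c e ≠ k} := by
  refine ⟨fun e he => G.mem_edgeFinset.1 (mem_filter.1 he).1, fun v => ?_⟩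
  obtain ⟨_, ⟨e, ⟨he, hve⟩, rfl⟩, hek⟩ := (hc v (hG v)).exists_ne k
  exact ⟨e, mem_filter.2 ⟨G.mem_edgeFinset.2 he, hek⟩, hve⟩

theorem IsEdgeCover.sInf_le_sum {C : Finset (Sym2 V)} (hC : IsEdgeCover G C) (ρ : Sym2 V → ℝ) :
    sInf {x : ℝ | ∃ C : Finset (Sym2 V), IsEdgeCover G C ∧ x = ∑ e ∈ C, ρ e}
      ≤ ∑ e ∈ C, ρ e := by
  have hfinite : {x : ℝ | ∃ C : Finset (Sym2 V), IsEdgeCover G C ∧ x = ∑ e ∈ C, ρ e}.Finite :=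
    (Set.finite_range fun C : Finset (Sym2 V) => ∑ e ∈ C, ρ e).subset <| by
      rintro _ ⟨C, -, rfl⟩
      exact ⟨C, rfl⟩
  exact csInf_le hfinite.bddBelow ⟨C, hC, rfl⟩

end EdgeCover

theorem half_sum_ge_min_edgeCover_general [Fintype V] [DecidableEq V] (G : SimpleGraph V)
    [DecidableRel G.Adj] (hdeg : ∀ v : V, 2 ≤ G.degree v) (ρ : Sym2 V → ℝ) :
    (3 / 4 : ℝ) * sInf {x : ℝ | ∃ C : Finset (Sym2 V), IsEdgeCover G C ∧ x = ∑ e ∈ C, ρ e}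
      ≤ (1 / 2 : ℝ) * ∑ e ∈ G.edgeFinset, ρ e := by
  set m := sInf {x : ℝ | ∃ C : Finset (Sym2 V), IsEdgeCover G C ∧ x = ∑ e ∈ C, ρ e}
  obtain ⟨c, hc⟩ : ∃ c : Sym2 V → Fin 3, NoMonochromaticStar G.edgeSet c :=
    exists_noMonochromaticStar (by simp) G.edgeSet.toFinite
  have hG : ∀ v, (G.incidenceSet v).Nontrivial := fun v =>
    (nontrivial_incidenceSet_iff G v).2 (hdeg v)
  have three_mul_le : 3 * m ≤ 2 * ∑ e ∈ G.edgeFinset, ρ e :=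
    calc 3 * m = ∑ _k : Fin 3, m := by simp
      _ ≤ ∑ k, ∑ e ∈ G.edgeFinset with c e ≠ k, ρ e :=
        sum_le_sum fun k _ => (hc.isEdgeCover_filter_ne hG k).sInf_le_sum ρ
      _ = 2 * ∑ e ∈ G.edgeFinset, ρ e := by simpa using sum_sum_filter_ne G.edgeFinset c ρ
  linarith

/-- For a cycle `C` and `ρ : C → ℝ_{≥0}`,
`(1/2) Σ_{e ∈ C} ρ(e) ≥ (3/4) min_{γ ∈ Γ_ec(C)} ℓ_ρ(γ)`. -/
theorem half_sum_ge_min_edgeCover [Fintype V] [DecidableEq V] (G : SimpleGraph V)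
    [DecidableRel G.Adj] (hconn : G.Connected) (hdeg : ∀ v : V, G.degree v = 2)
    (ρ : Sym2 V → ℝ) (hρ : ∀ e, 0 ≤ ρ e) :
    (3 / 4 : ℝ) * sInf {x : ℝ | ∃ C : Finset (Sym2 V), IsEdgeCover G C ∧ x = ∑ e ∈ C, ρ e}
      ≤ (1 / 2 : ℝ) * ∑ e ∈ G.edgeFinset, ρ e := by
  exact half_sum_ge_min_edgeCover_general G (fun v => (hdeg v).ge) ρ
end
end

section
/- Let G be a finite simple graph with no isolated vertices. If a density ρ ∈ ℝ^E_{≥0} is admissible for the family Γ_ec of edge covers of G, then the density (4/3)·ρ is admissible for the family Γ_bfec of basic fractional edge covers of G (equivalently, for all fractional edge covers of G). -/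
open Finset

noncomputable section
open scoped Classical

variable {V : Type*}

/-- The connected component of `u` in `H` is a substar: all its edges share a common vertex. -/
def IsSubstarComponent (H : SimpleGraph V) (u : V) : Prop :=
  ∃ c : V, ∀ x y : V, H.Adj x y → H.Reachable u x → x = c ∨ y = c

/-- The connected component of `u` in `H` is a cycle of odd length. -/
def IsOddCycleComponent (H : SimpleGraph V) (u : V) : Prop :=
  ∃ (w : V) (c : H.Walk w w), c.IsCycle ∧ Odd c.length ∧ H.Reachable u w ∧
    ∀ x y : V, H.Adj x y → H.Reachable u x → s(x, y) ∈ c.edges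

/-- `γ` is a basic fractional edge cover of `G`: a fractional edge cover taking values
only in `{0, 1/2, 1}`, whose support is a vertex-disjoint union of odd cycles and
substars, with `γ(e) = 1/2` exactly on the edges lying on odd cycles of the support. -/
def IsBasicFEC [Fintype V] [DecidableEq V] (G : SimpleGraph V) (γ : Sym2 V → ℝ) : Prop :=
  γ ∈ Γfec G ∧
  (∀ e, γ e = 0 ∨ γ e = 1 / 2 ∨ γ e = 1) ∧
  (∀ u v : V, (suppGraph G γ).Adj u v →
    IsSubstarComponent (suppGraph G γ) u ∨ IsOddCycleComponent (suppGraph G γ) u) ∧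
  (∀ e ∈ G.edgeSet, (γ e = 1 / 2 ↔ ∃ (w : V) (c : (suppGraph G γ).Walk w w),
    c.IsCycle ∧ Odd c.length ∧ e ∈ c.edges))

/-- The family of basic fractional edge covers of `G`. -/
def Γbfec [Fintype V] [DecidableEq V] (G : SimpleGraph V) : Set (Sym2 V → ℝ) :=
  {γ | IsBasicFEC G γ}

/-!
Every half-integral fractional edge cover `γ` can be rounded to three edge covers. A vertex met by
no edge of weight `1` meets at least two edges of weight `1 / 2`; choose two of them. An edge is
chosen by at most its two endpoints, hence is paired with at most two other edges, and a greedy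
`3`-colouring separates all the chosen pairs. Deleting one colour class of the edges of weight
`1 / 2` from the support of `γ` therefore leaves an edge cover. The three edge covers obtained in
this way use each edge of weight `1` three times and each edge of weight `1 / 2` twice, so their sum
is at most `4 γ`, while each of them has `ρ`-length at least `1`.
-/

section Coloring

theorem colorable_of_degree_lt {α : Type*} [Fintype α] (H : SimpleGraph α) {n : ℕ}
    (hH : ∀ a, H.degree a < n) : H.Colorable n := by
  suffices hpartial : ∀ s : Finset α, ∃ c : α → Fin n, ∀ a ∈ s, ∀ b ∈ s, H.Adj a b → c a ≠ c b by
    obtain ⟨c, hc⟩ := hpartial univ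
    exact ⟨SimpleGraph.Coloring.mk c fun {a b} => hc a (mem_univ a) b (mem_univ b)⟩
  intro s
  induction s using Finset.induction_on with
  | empty => exact ⟨fun a => ⟨0, (hH a).pos⟩, by simp⟩
  | insert a s ha ih =>
    obtain ⟨c, hc⟩ := ih
    obtain ⟨k, hk⟩ : ∃ k, k ∉ (H.neighborFinset a).image c := by
      by_contra! hall
      have hcard := (card_image_le (f := c)).trans_lt (hH a)
      rw [eq_univ_of_forall hall, card_univ, Fintype.card_fin] at hcard
      exact hcard.false
    have hfree : ∀ b, H.Adj a b → k ≠ c b := by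
      rintro b hab rfl
      exact hk (mem_image_of_mem c ((H.mem_neighborFinset a b).2 hab))
    refine ⟨Function.update c a k, fun x hx y hy hxy => ?_⟩
    rcases eq_or_ne x a with rfl | hxa
    · simpa [hxy.ne'] using hfree y hxy
    rcases eq_or_ne y a with rfl | hya
    · simpa [hxa] using (hfree x hxy.symm).symm
    · simpa [hxa, hya] using
        hc x (mem_of_mem_insert_of_ne hx hxa) y (mem_of_mem_insert_of_ne hy hya) hxy

/-- The conflict graph of the pairs `{p v, q v}`: distinct objects are adjacent if they form the
pair of some `v`. Its proper colourings are those separating `p v` from `q v` whenever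
`p v ≠ q v`. -/
def conflictGraph {α : Type*} (p q : V → α) : SimpleGraph α :=
  SimpleGraph.fromRel fun e f => ∃ v, e = p v ∧ f = q v

theorem conflictGraph_degree_le_two [Fintype V] {p q : V → Sym2 V}
    (hp : ∀ v, v ∈ p v) (hq : ∀ v, v ∈ q v) (e : Sym2 V) :
    (conflictGraph p q).degree e ≤ 2 := by
  have hsub : (conflictGraph p q).neighborFinset e ⊆
      e.toFinset.image fun v => if e = p v then q v else p v := by
    intro f hf
    rw [SimpleGraph.mem_neighborFinset, conflictGraph, SimpleGraph.fromRel_adj] at hf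
    obtain ⟨hef, ⟨v, rfl, rfl⟩ | ⟨v, rfl, rfl⟩⟩ := hf
    · exact mem_image.2 ⟨v, Sym2.mem_toFinset.2 (hp v), if_pos rfl⟩
    · exact mem_image.2 ⟨v, Sym2.mem_toFinset.2 (hq v), if_neg hef⟩
  calc (conflictGraph p q).degree e
      ≤ #(e.toFinset.image fun v => if e = p v then q v else p v) := card_le_card hsub
    _ ≤ #e.toFinset := card_image_le
    _ ≤ 2 := by rw [Sym2.card_toFinset]; split_ifs <;> norm_num

theorem exists_three_coloring_image_nontrivial [Finite V] (S : Set (Sym2 V)) :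
    ∃ c : Sym2 V → Fin 3, ∀ v, {e ∈ S | v ∈ e}.Nontrivial →
      (c '' {e ∈ S | v ∈ e}).Nontrivial := by
  have := Fintype.ofFinite V
  have hpair : ∀ v, ∃ p q : Sym2 V, v ∈ p ∧ v ∈ q ∧
      ({e ∈ S | v ∈ e}.Nontrivial → p ∈ S ∧ q ∈ S ∧ p ≠ q) := by
    intro v
    by_cases hv : {e ∈ S | v ∈ e}.Nontrivial
    · obtain ⟨p, ⟨hpS, hvp⟩, q, ⟨hqS, hvq⟩, hpq⟩ := hv
      exact ⟨p, q, hvp, hvq, fun _ => ⟨hpS, hqS, hpq⟩⟩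
    · exact ⟨s(v, v), s(v, v), Sym2.mem_mk_left v v, Sym2.mem_mk_left v v, fun h => absurd h hv⟩
  choose p q hp hq hpq using hpair
  obtain ⟨c⟩ := colorable_of_degree_lt (conflictGraph p q) (n := 3) fun e =>
    Nat.lt_succ_of_le (conflictGraph_degree_le_two hp hq e)
  refine ⟨c, fun v hv => ?_⟩
  obtain ⟨hpS, hqS, hne⟩ := hpq v hv
  have hadj : (conflictGraph p q).Adj (p v) (q v) :=
    (SimpleGraph.fromRel_adj _ _ _).2 ⟨hne, Or.inl ⟨v, rfl, rfl⟩⟩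
  exact ⟨c (p v), ⟨p v, ⟨hpS, hp v⟩, rfl⟩, c (q v), ⟨q v, ⟨hqS, hq v⟩, rfl⟩, c.valid hadj⟩

end Coloring

section Adm

variable [Fintype V] [DecidableEq V] {G : SimpleGraph V}

theorem Adm_anti {Γ Γ' : Set (Sym2 V → ℝ)} (h : Γ ⊆ Γ') : Adm G Γ' ⊆ Adm G Γ :=
  fun _ hρ => ⟨hρ.1, hρ.2.1, fun γ hγ => hρ.2.2 γ (h hγ)⟩

theorem card_le_mul_sum_of_mem_Adm {ι : Type*} [Fintype ι] {Γ : Set (Sym2 V → ℝ)}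
    {ρ γ : Sym2 V → ℝ} (hρ : ρ ∈ Adm G Γ) {f : ι → Sym2 V → ℝ} (hf : ∀ i, f i ∈ Γ) {t : ℝ}
    (hle : ∀ e ∈ G.edgeSet, ∑ i, f i e ≤ t * γ e) :
    (Fintype.card ι : ℝ) ≤ t * ∑ e ∈ G.edgeFinset, γ e * ρ e := by
  obtain ⟨hnonneg, -, hadm⟩ := hρ
  calc (Fintype.card ι : ℝ)
      = ∑ _i : ι, (1 : ℝ) := by simp
    _ ≤ ∑ i, ∑ e ∈ G.edgeFinset, f i e * ρ e := sum_le_sum fun i _ => hadm (f i) (hf i)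
    _ = ∑ e ∈ G.edgeFinset, (∑ i, f i e) * ρ e := by
        rw [sum_comm]
        simp only [sum_mul]
    _ ≤ ∑ e ∈ G.edgeFinset, t * γ e * ρ e := sum_le_sum fun e he =>
        mul_le_mul_of_nonneg_right (hle e (SimpleGraph.mem_edgeFinset.1 he)) (hnonneg e)
    _ = t * ∑ e ∈ G.edgeFinset, γ e * ρ e := by simp only [mul_sum, mul_assoc]

end Adm

section HalfIntegral

/-- The edges of `G` on which `γ` takes the value `1 / 2`. -/
def halfEdges (G : SimpleGraph V) (γ : Sym2 V → ℝ) : Set (Sym2 V) :=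
  {e ∈ G.edgeSet | γ e = 1 / 2}

variable [Fintype V] {G : SimpleGraph V} {γ : Sym2 V → ℝ}

/-- The rounding of a half-integral `γ` to a set of edges: keep the edges of weight `1`, and those
of weight `1 / 2` whose colour is not `i`. -/
def dropColor {κ : Type*} (G : SimpleGraph V) (γ : Sym2 V → ℝ) (c : Sym2 V → κ) (i : κ) :
    Finset (Sym2 V) :=
  {e ∈ G.edgeFinset | γ e = 1 ∨ γ e = 1 / 2 ∧ c e ≠ i}

theorem mem_dropColor {κ : Type*} {c : Sym2 V → κ} {i : κ} {e : Sym2 V} :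
    e ∈ dropColor G γ c i ↔ e ∈ G.edgeSet ∧ (γ e = 1 ∨ γ e = 1 / 2 ∧ c e ≠ i) := by
  rw [dropColor, mem_filter, SimpleGraph.mem_edgeFinset]

variable [DecidableEq V]

/-- The half-integral fractional edge covers of `G` with values at most `1`. Unlike in `Γbfec`, the
shape of the support is arbitrary. -/
def Γhfec (G : SimpleGraph V) : Set (Sym2 V → ℝ) :=
  {γ ∈ Γfec G | ∀ e, γ e = 0 ∨ γ e = 1 / 2 ∨ γ e = 1}

theorem Γbfec_subset_Γhfec (G : SimpleGraph V) : Γbfec G ⊆ Γhfec G :=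
  fun _ hγ => ⟨hγ.1, hγ.2.1⟩

theorem exists_eq_one_or_halfEdges_nontrivial (hγ : γ ∈ Γhfec G) (v : V) :
    (∃ e ∈ G.incidenceSet v, γ e = 1) ∨ {e ∈ halfEdges G γ | v ∈ e}.Nontrivial := by
  obtain ⟨⟨-, -, hcover⟩, hval⟩ := hγ
  by_contra! hv
  obtain ⟨hone, hhalf⟩ := hv
  have hcard : #{e ∈ G.incidenceFinset v | γ e = 1 / 2} ≤ 1 := by
    refine card_le_one.2 fun e he f hf => ?_
    simp only [mem_filter, SimpleGraph.mem_incidenceFinset] at he hf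
    exact hhalf ⟨⟨he.1.1, he.2⟩, he.1.2⟩ ⟨⟨hf.1.1, hf.2⟩, hf.1.2⟩
  have hsum : ∑ e ∈ G.incidenceFinset v, γ e ≤ 1 / 2 := by
    calc ∑ e ∈ G.incidenceFinset v, γ e
        = ∑ e ∈ G.incidenceFinset v, if γ e = 1 / 2 then (1 / 2 : ℝ) else 0 := by
          refine sum_congr rfl fun e he => ?_
          have := hone e ((G.mem_incidenceFinset v e).1 he)
          grind
      _ = #{e ∈ G.incidenceFinset v | γ e = 1 / 2} * (1 / 2 : ℝ) := by
          rw [← sum_filter, sum_const, nsmul_eq_mul]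
      _ ≤ 1 / 2 := by
          have : (#{e ∈ G.incidenceFinset v | γ e = 1 / 2} : ℝ) ≤ 1 := mod_cast hcard
          linarith
  linarith [hcover v]

theorem isEdgeCover_dropColor {κ : Type*} (hγ : γ ∈ Γhfec G) {c : Sym2 V → κ}
    (hc : ∀ v, {e ∈ halfEdges G γ | v ∈ e}.Nontrivial →
      (c '' {e ∈ halfEdges G γ | v ∈ e}).Nontrivial) (i : κ) :
    IsEdgeCover G (dropColor G γ c i) := by
  refine ⟨fun e he => (mem_dropColor.1 he).1, fun v => ?_⟩
  rcases exists_eq_one_or_halfEdges_nontrivial hγ v with ⟨e, ⟨he, hve⟩, hone⟩ | hhalf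
  · exact ⟨e, mem_dropColor.2 ⟨he, Or.inl hone⟩, hve⟩
  · obtain ⟨_, ⟨e, ⟨⟨he, heq⟩, hve⟩, rfl⟩, hei⟩ := (hc v hhalf).exists_ne i
    exact ⟨e, mem_dropColor.2 ⟨he, Or.inr ⟨heq, hei⟩⟩, hve⟩

theorem sum_indicator_dropColor_le (c : Sym2 V → Fin 3) {e : Sym2 V}
    (he : γ e = 0 ∨ γ e = 1 / 2 ∨ γ e = 1) :
    ∑ i, (if e ∈ dropColor G γ c i then (1 : ℝ) else 0) ≤ 4 * γ e := by
  have hcount : ∑ i, (if e ∈ dropColor G γ c i then (1 : ℝ) else 0) =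
      #{i | e ∈ dropColor G γ c i} := sum_boole _ _
  rw [hcount]
  rcases he with hzero | hhalf | hone
  · simp [mem_dropColor, hzero]
  · have hsub : ({i | e ∈ dropColor G γ c i} : Finset (Fin 3)) ⊆ univ.erase (c e) := by
      intro i hi
      rw [mem_filter, mem_dropColor, hhalf] at hi
      have hei : c e ≠ i := by
        rcases hi.2.2 with habs | ⟨-, hei⟩
        · norm_num at habs
        · exact hei
      exact mem_erase.2 ⟨hei.symm, mem_univ i⟩
    have hcard : #{i | e ∈ dropColor G γ c i} ≤ 2 := by simpa using card_le_card hsub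
    have : (#{i | e ∈ dropColor G γ c i} : ℝ) ≤ 2 := mod_cast hcard
    linarith
  · have hcard : #{i | e ∈ dropColor G γ c i} ≤ 3 := by
      simpa using card_le_univ {i | e ∈ dropColor G γ c i}
    have : (#{i | e ∈ dropColor G γ c i} : ℝ) ≤ 3 := mod_cast hcard
    linarith

end HalfIntegral

theorem scaled_adm_bfec_general [Fintype V] [DecidableEq V] (G : SimpleGraph V)
    (ρ : Sym2 V → ℝ) (hρ : ρ ∈ Adm G (Γec G)) :
    (fun e => (4 / 3 : ℝ) * ρ e) ∈ Adm G (Γhfec G) := by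
  refine ⟨fun e => mul_nonneg (by norm_num) (hρ.1 e), fun e he => by simp [hρ.2.1 e he],
    fun γ hγ => ?_⟩
  obtain ⟨c, hc⟩ := exists_three_coloring_image_nontrivial (halfEdges G γ)
  have hlength : (Fintype.card (Fin 3) : ℝ) ≤ 4 * ∑ e ∈ G.edgeFinset, γ e * ρ e :=
    card_le_mul_sum_of_mem_Adm hρ
      (fun i => ⟨dropColor G γ c i, isEdgeCover_dropColor hγ hc i, rfl⟩)
      (fun e _ => sum_indicator_dropColor_le c (hγ.2 e))
  have hscale : ∑ e ∈ G.edgeFinset, γ e * (4 / 3 * ρ e) =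
      4 / 3 * ∑ e ∈ G.edgeFinset, γ e * ρ e := by
    simp only [mul_sum, mul_left_comm]
  rw [hscale]
  norm_num at hlength
  linarith

/-- If `ρ` is admissible for the family of edge covers, then `(4/3)ρ` is admissible for
the family of basic fractional edge covers. -/
theorem scaled_adm_bfec [Fintype V] [DecidableEq V] (G : SimpleGraph V)
    (hiso : ∀ v : V, ∃ u, G.Adj v u) (ρ : Sym2 V → ℝ) (hρ : ρ ∈ Adm G (Γec G)) :
    (fun e => (4 / 3 : ℝ) * ρ e) ∈ Adm G (Γbfec G) :=
  Adm_anti (Γbfec_subset_Γhfec G) (scaled_adm_bfec_general G ρ hρ)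
end
end

section
/- Let G be a finite simple graph with no isolated vertices and positive edge weights σ, let Γ_star be the family of stars of G, and let δ(G) = min_{v∈V} deg(v) be the minimum degree. Then for 1 ≤ p < ∞: σ_min / δ(G)^p ≤ Mod_{p,σ}(Γ_star) ≤ σ(E) / δ(G)^p, where σ_min = min_{e∈E} σ(e) and σ(E) = Σ_{e∈E} σ(e). -/
open Finset

noncomputable section
open scoped Classical

variable {V : Type*}

/-!
If `γ ∈ Γ` is nonnegative, then every admissible density is at least `(∑ e, γ e)⁻¹` on some edge,
and that single edge already contributes `σ_min / (∑ e, γ e) ^ p` to the energy. Conversely, the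
uniform density `ℓ⁻¹` is admissible as soon as every `γ ∈ Γ` has total mass at least `ℓ`, and its
energy is `σ(E) / ℓ ^ p`. The total mass of the star at `v` is `deg v`, so for stars both bounds
apply with `δ(G)` as the mass.
-/

section Modulus

variable [Fintype V] [DecidableEq V] {G : SimpleGraph V}
  {Γ : Set (Sym2 V → ℝ)} {σ ρ γ : Sym2 V → ℝ} {p c ℓ : ℝ}

theorem energy_nonneg (hσ : ∀ e ∈ G.edgeSet, 0 ≤ σ e) (hρ : ∀ e, 0 ≤ ρ e) :
    0 ≤ energy p σ G ρ :=
  sum_nonneg fun e he =>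
    mul_nonneg (hσ e (SimpleGraph.mem_edgeFinset.1 he)) (Real.rpow_nonneg (hρ e) p)

theorem mul_rpow_le_energy (hσ : ∀ e ∈ G.edgeSet, 0 ≤ σ e) (hρ : ∀ e, 0 ≤ ρ e)
    {e : Sym2 V} (he : e ∈ G.edgeSet) : σ e * ρ e ^ p ≤ energy p σ G ρ :=
  single_le_sum (f := fun e => σ e * ρ e ^ p)
    (fun e' he' =>
      mul_nonneg (hσ e' (SimpleGraph.mem_edgeFinset.1 he')) (Real.rpow_nonneg (hρ e') p))
    (SimpleGraph.mem_edgeFinset.2 he)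

theorem modulus_le_energy (hσ : ∀ e ∈ G.edgeSet, 0 ≤ σ e) (hρ : ρ ∈ Adm G Γ) :
    Modulus p σ G Γ ≤ energy p σ G ρ := by
  refine csInf_le ⟨0, ?_⟩ (Set.mem_image_of_mem _ hρ)
  rintro _ ⟨ρ', hρ', rfl⟩
  exact energy_nonneg hσ hρ'.1

theorem le_modulus (hΓ : (Adm G Γ).Nonempty) (h : ∀ ρ ∈ Adm G Γ, c ≤ energy p σ G ρ) :
    c ≤ Modulus p σ G Γ :=
  le_csInf (hΓ.image _) (Set.forall_mem_image.2 h)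

variable [Fintype G.edgeSet]

-- `Adm` and `energy` sum over `G.edgeFinset` with a classical `Fintype` instance, which need not be
-- the ambient one.
theorem mem_adm_iff : ρ ∈ Adm G Γ ↔ (∀ e, 0 ≤ ρ e) ∧ (∀ e ∉ G.edgeSet, ρ e = 0) ∧
    ∀ γ ∈ Γ, 1 ≤ ∑ e ∈ G.edgeFinset, γ e * ρ e := by
  rw [Adm, Set.mem_ofPred_eq]
  convert Iff.rfl

theorem energy_eq_sum (p : ℝ) (σ ρ : Sym2 V → ℝ) :
    energy p σ G ρ = ∑ e ∈ G.edgeFinset, σ e * ρ e ^ p := by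
  unfold energy
  convert rfl

theorem indicator_edgeSet_inv_mem_adm (hℓ : 0 < ℓ)
    (hΓ : ∀ γ ∈ Γ, ℓ ≤ ∑ e ∈ G.edgeFinset, γ e) :
    G.edgeSet.indicator (fun _ => ℓ⁻¹) ∈ Adm G Γ := by
  refine mem_adm_iff.2 ⟨fun e => Set.indicator_nonneg (fun _ _ => (inv_pos.2 hℓ).le) e,
    fun e he => Set.indicator_of_notMem he _, fun γ hγ => ?_⟩
  calc
    1 ≤ (∑ e ∈ G.edgeFinset, γ e) * ℓ⁻¹ := by
      rw [← div_eq_mul_inv, one_le_div hℓ]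
      exact hΓ γ hγ
    _ = ∑ e ∈ G.edgeFinset, γ e * G.edgeSet.indicator (fun _ => ℓ⁻¹) e := by
      rw [sum_mul]
      refine sum_congr rfl fun e he => ?_
      rw [Set.indicator_of_mem (SimpleGraph.mem_edgeFinset.1 he)]

theorem energy_indicator_edgeSet_inv (hℓ : 0 ≤ ℓ) :
    energy p σ G (G.edgeSet.indicator fun _ => ℓ⁻¹) = (∑ e ∈ G.edgeFinset, σ e) / ℓ ^ p := by
  rw [energy_eq_sum, sum_div]
  refine sum_congr rfl fun e he => ?_
  rw [Set.indicator_of_mem (SimpleGraph.mem_edgeFinset.1 he), Real.inv_rpow hℓ, div_eq_mul_inv]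

theorem modulus_le_sum_div_rpow (hσ : ∀ e ∈ G.edgeSet, 0 ≤ σ e) (hℓ : 0 < ℓ)
    (hΓ : ∀ γ ∈ Γ, ℓ ≤ ∑ e ∈ G.edgeFinset, γ e) :
    Modulus p σ G Γ ≤ (∑ e ∈ G.edgeFinset, σ e) / ℓ ^ p :=
  (modulus_le_energy hσ (indicator_edgeSet_inv_mem_adm hℓ hΓ)).trans_eq
    (energy_indicator_edgeSet_inv hℓ.le)

theorem exists_inv_sum_le_of_mem_adm (hρ : ρ ∈ Adm G Γ) (hγ : γ ∈ Γ)
    (hγ_nonneg : ∀ e ∈ G.edgeSet, 0 ≤ γ e) :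
    ∃ e ∈ G.edgeSet, (∑ e ∈ G.edgeFinset, γ e)⁻¹ ≤ ρ e := by
  obtain ⟨hρ_nonneg, -, hlen⟩ := mem_adm_iff.1 hρ
  have hE : G.edgeFinset.Nonempty :=
    nonempty_of_sum_ne_zero (zero_lt_one.trans_le (hlen γ hγ)).ne'
  obtain ⟨e, he, hmax⟩ := G.edgeFinset.exists_max_image ρ hE
  have hmul : 1 ≤ ρ e * ∑ e' ∈ G.edgeFinset, γ e' :=
    calc
      1 ≤ ∑ e' ∈ G.edgeFinset, γ e' * ρ e' := hlen γ hγ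
      _ ≤ ∑ e' ∈ G.edgeFinset, γ e' * ρ e := sum_le_sum fun e' he' =>
        mul_le_mul_of_nonneg_left (hmax e' he') (hγ_nonneg e' (SimpleGraph.mem_edgeFinset.1 he'))
      _ = ρ e * ∑ e' ∈ G.edgeFinset, γ e' := by rw [← sum_mul, mul_comm]
  have hsum : 0 < ∑ e' ∈ G.edgeFinset, γ e' :=
    pos_of_mul_pos_right (zero_lt_one.trans_le hmul) (hρ_nonneg e)
  exact ⟨e, SimpleGraph.mem_edgeFinset.1 he, (inv_le_iff_one_le_mul₀ hsum).2 hmul⟩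

theorem inf'_div_rpow_le_energy (hE : G.edgeFinset.Nonempty) (hσ : ∀ e ∈ G.edgeSet, 0 ≤ σ e)
    (hp : 0 ≤ p) (hρ : ρ ∈ Adm G Γ) (hγ : γ ∈ Γ) (hγ_nonneg : ∀ e ∈ G.edgeSet, 0 ≤ γ e) :
    G.edgeFinset.inf' hE σ / (∑ e ∈ G.edgeFinset, γ e) ^ p ≤ energy p σ G ρ := by
  obtain ⟨e, he, hρe⟩ := exists_inv_sum_le_of_mem_adm hρ hγ hγ_nonneg
  have hsum : 0 ≤ ∑ e ∈ G.edgeFinset, γ e :=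
    sum_nonneg fun e he => hγ_nonneg e (SimpleGraph.mem_edgeFinset.1 he)
  calc
    G.edgeFinset.inf' hE σ / (∑ e ∈ G.edgeFinset, γ e) ^ p
      = G.edgeFinset.inf' hE σ * (∑ e ∈ G.edgeFinset, γ e)⁻¹ ^ p := by
        rw [Real.inv_rpow hsum, div_eq_mul_inv]
    _ ≤ σ e * (∑ e ∈ G.edgeFinset, γ e)⁻¹ ^ p := by
        gcongr
        exact inf'_le σ (SimpleGraph.mem_edgeFinset.2 he)
    _ ≤ σ e * ρ e ^ p := by
        gcongr
        exact hσ e he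
    _ ≤ energy p σ G ρ := mul_rpow_le_energy hσ hρ.1 he

theorem inf'_div_rpow_le_modulus (hE : G.edgeFinset.Nonempty) (hσ : ∀ e ∈ G.edgeSet, 0 ≤ σ e)
    (hp : 0 ≤ p) (hΓ : (Adm G Γ).Nonempty) (hγ : γ ∈ Γ)
    (hγ_nonneg : ∀ e ∈ G.edgeSet, 0 ≤ γ e) :
    G.edgeFinset.inf' hE σ / (∑ e ∈ G.edgeFinset, γ e) ^ p ≤ Modulus p σ G Γ :=
  le_modulus hΓ fun _ hρ => inf'_div_rpow_le_energy hE hσ hp hρ hγ hγ_nonneg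

end Modulus

theorem Γstar_eq_range [Fintype V] [DecidableEq V] (G : SimpleGraph V) :
    Γstar G = Set.range fun v => (G.incidenceSet v).indicator 1 := by
  ext γ
  simp only [Γstar, Set.mem_ofPred_eq, Set.mem_range, SimpleGraph.mem_incidenceFinset, eq_comm,
    funext_iff, Set.indicator_apply, Pi.one_apply]

theorem sum_indicator_incidenceSet (G : SimpleGraph V) [Fintype G.edgeSet] (v : V)
    [Fintype (G.neighborSet v)] :
    ∑ e ∈ G.edgeFinset, (G.incidenceSet v).indicator (1 : Sym2 V → ℝ) e = G.degree v := by
  simp only [Set.indicator_apply, Pi.one_apply, sum_boole]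
  rw [← G.card_incidenceFinset_eq_degree]
  congr 2
  ext e
  rw [mem_filter, SimpleGraph.mem_edgeFinset, SimpleGraph.mem_incidenceFinset]
  exact and_iff_right_of_imp fun he => G.incidenceSet_subset v he

theorem minDegree_pos_of_forall_exists_adj [Fintype V] [Nonempty V] (G : SimpleGraph V)
    [DecidableRel G.Adj] (hiso : ∀ v : V, ∃ u, G.Adj v u) : 0 < G.minDegree :=
  G.le_minDegree_of_forall_le_degree 1 fun v => (G.degree_pos_iff_exists_adj v).2 (hiso v)

theorem mod_star_bounds_general [Fintype V] [DecidableEq V] (G : SimpleGraph V)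
    [DecidableRel G.Adj] (hiso : ∀ v : V, ∃ u, G.Adj v u) (hE : G.edgeFinset.Nonempty)
    (σ : Sym2 V → ℝ) (hσ : ∀ e ∈ G.edgeSet, 0 ≤ σ e) (p : ℝ) (hp : 0 ≤ p) :
    G.edgeFinset.inf' hE σ / (G.minDegree : ℝ) ^ p ≤ Modulus p σ G (Γstar G) ∧
    Modulus p σ G (Γstar G) ≤ (∑ e ∈ G.edgeFinset, σ e) / (G.minDegree : ℝ) ^ p := by
  have : Nonempty V := hE.to_type.map fun e => e.out.1
  have hδ : (0 : ℝ) < G.minDegree :=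
    Nat.cast_pos.2 (minDegree_pos_of_forall_exists_adj G hiso)
  have hΓ : ∀ γ ∈ Γstar G, (G.minDegree : ℝ) ≤ ∑ e ∈ G.edgeFinset, γ e := by
    rw [Γstar_eq_range, Set.forall_mem_range]
    intro v
    rw [sum_indicator_incidenceSet]
    exact Nat.cast_le.2 (G.minDegree_le_degree v)
  obtain ⟨v, hv⟩ := G.exists_minimal_degree_vertex
  have hstar : (G.incidenceSet v).indicator 1 ∈ Γstar G :=
    Γstar_eq_range G ▸ Set.mem_range_self v
  refine ⟨?_, modulus_le_sum_div_rpow hσ hδ hΓ⟩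
  rw [hv, ← sum_indicator_incidenceSet]
  exact inf'_div_rpow_le_modulus hE hσ hp ⟨_, indicator_edgeSet_inv_mem_adm hδ hΓ⟩ hstar
    fun e _ => Set.indicator_nonneg (fun _ _ => zero_le_one) e

/-- `σ_min / δ(G)^p ≤ Mod_{p,σ}(Γ_star) ≤ σ(E) / δ(G)^p`. -/
theorem mod_star_bounds [Fintype V] [DecidableEq V] [Nonempty V] (G : SimpleGraph V)
    [DecidableRel G.Adj] (hiso : ∀ v : V, ∃ u, G.Adj v u) (hE : G.edgeFinset.Nonempty)
    (σ : Sym2 V → ℝ) (hσ : ∀ e, 0 < σ e) (p : ℝ) (hp : 1 ≤ p) :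
    G.edgeFinset.inf' hE σ / (G.minDegree : ℝ) ^ p ≤ Modulus p σ G (Γstar G) ∧
    Modulus p σ G (Γstar G) ≤ (∑ e ∈ G.edgeFinset, σ e) / (G.minDegree : ℝ) ^ p :=
  mod_star_bounds_general G hiso hE σ (fun e _ => (hσ e).le) p (zero_le_one.trans hp)
end
end

section
/- Let G be a finite simple unweighted d-regular graph with d ≥ 1, and let Γ_star be the family of stars of G. Then for every 1 < p < ∞, the constant density ρ ≡ 1/d is extremal (it is admissible and attains the infimum defining the modulus), and Mod_p(Γ_star) = |E| / d^p. -/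
/-!
Every edge lies in exactly two stars, so summing the constraints `ρ(δ(v)) ≥ 1` over all vertices
gives `2 Σ_e ρ(e) ≥ |V|`. In a `d`-regular graph `d |V| = 2 |E|`, so an admissible density has mean
at least `1/d`. By the power mean inequality its `p`-energy is at least `|E| (1/d)^p`, which is the
energy of the constant density `1/d`.
-/

open Finset

noncomputable section
open scoped Classical

variable {V : Type*}

theorem card_mul_rpow_le_sum_rpow {ι : Type*} {s : Finset ι} {f : ι → ℝ} {a p : ℝ} (hp : 1 ≤ p)
    (ha : 0 ≤ a) (hf : ∀ i ∈ s, 0 ≤ f i) (hsum : #s * a ≤ ∑ i ∈ s, f i) :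
    #s * a ^ p ≤ ∑ i ∈ s, f i ^ p := by
  rcases s.eq_empty_or_nonempty with rfl | hs
  · simp
  have hcard : (0 : ℝ) < #s := by exact_mod_cast hs.card_pos
  refine le_of_mul_le_mul_left ?_ (Real.rpow_pos_of_pos hcard (p - 1))
  calc (#s : ℝ) ^ (p - 1) * (#s * a ^ p)
      = (#s * a) ^ p := by
        rw [Real.mul_rpow hcard.le ha, ← mul_assoc, ← Real.rpow_add_one hcard.ne', sub_add_cancel]
    _ ≤ (∑ i ∈ s, f i) ^ p := by gcongr
    _ ≤ #s ^ (p - 1) * ∑ i ∈ s, f i ^ p := Real.rpow_sum_le_const_mul_sum_rpow_of_nonneg s hp hf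

section

variable [Fintype V] {G : SimpleGraph V} [DecidableRel G.Adj] {ρ : Sym2 V → ℝ} {c p : ℝ} {d : ℕ}

theorem two_mul_card_edgeFinset_le (hdeg : ∀ v, G.degree v ≤ d) :
    2 * #G.edgeFinset ≤ Fintype.card V * d := by
  rw [← G.sum_degrees_eq_twice_card_edges]
  exact Finset.sum_le_card_nsmul _ _ _ fun v _ => hdeg v

variable [DecidableEq V]

theorem sum_sum_incidenceFinset {M : Type*} [AddCommMonoid M] (f : Sym2 V → M) :
    ∑ v, ∑ e ∈ G.incidenceFinset v, f e = 2 • ∑ e ∈ G.edgeFinset, f e := by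
  calc ∑ v, ∑ e ∈ G.incidenceFinset v, f e
      = ∑ e ∈ G.edgeFinset, ∑ _v ∈ e.toFinset, f e :=
        Finset.sum_comm' fun v e => by
          simp [SimpleGraph.incidenceSet, and_comm]
    _ = ∑ e ∈ G.edgeFinset, 2 • f e := Finset.sum_congr rfl fun e he => by
        rw [Finset.sum_const, G.card_toFinset_mem_edgeFinset ⟨e, he⟩]
    _ = 2 • ∑ e ∈ G.edgeFinset, f e := Finset.sum_nsmul _ _ _

-- `energy` and `Adm` sum over `G.edgeFinset` with a classical `Fintype` instance; the next two
-- lemmas restate them for the instance derived from `DecidableRel G.Adj`.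
theorem energy_one_eq_sum_rpow :
    energy p (fun _ => 1) G ρ = ∑ e ∈ G.edgeFinset, ρ e ^ p := by
  simp only [energy, one_mul]
  congr!

theorem mem_adm_Γstar_iff :
    ρ ∈ Adm G (Γstar G) ↔ (∀ e, 0 ≤ ρ e) ∧ (∀ e ∉ G.edgeSet, ρ e = 0) ∧
      ∀ v, 1 ≤ ∑ e ∈ G.incidenceFinset v, ρ e := by
  have length_star (v : V) :
      ∑ e ∈ G.edgeFinset, (if e ∈ G.incidenceFinset v then 1 else 0) * ρ e =
        ∑ e ∈ G.incidenceFinset v, ρ e := by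
    simp only [ite_mul, one_mul, zero_mul, Finset.sum_ite_mem,
      Finset.inter_eq_right.2 (G.incidenceFinset_subset v)]
  simp only [Adm, Γstar, Set.mem_ofPred_eq, forall_exists_index, forall_eq_apply_imp_iff]
  refine and_congr_right' (and_congr_right' (forall_congr' fun v => ?_))
  rw [← length_star v]
  congr!

theorem energy_one_edgeFinset_ite :
    energy p (fun _ => 1) G (fun e => if e ∈ G.edgeFinset then c else 0) =
      #G.edgeFinset * c ^ p := by
  rw [energy_one_eq_sum_rpow, Finset.sum_congr rfl fun e he => by rw [if_pos he],
    Finset.sum_const, nsmul_eq_mul]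

theorem edgeFinset_ite_mem_adm_Γstar (hc : 0 ≤ c) (hdeg : ∀ v, 1 ≤ G.degree v * c) :
    (fun e => if e ∈ G.edgeFinset then c else 0) ∈ Adm G (Γstar G) := by
  refine mem_adm_Γstar_iff.2 ⟨fun e => ?_, fun e he => ?_, fun v => ?_⟩
  · positivity
  · exact if_neg (mt SimpleGraph.mem_edgeFinset.1 he)
  · rw [Finset.sum_congr rfl fun e he => if_pos (G.incidenceFinset_subset v he),
      Finset.sum_const, G.card_incidenceFinset_eq_degree, nsmul_eq_mul]
    exact hdeg v

theorem card_le_two_mul_sum_of_mem_adm_Γstar (hρ : ρ ∈ Adm G (Γstar G)) :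
    (Fintype.card V : ℝ) ≤ 2 * ∑ e ∈ G.edgeFinset, ρ e := by
  obtain ⟨-, -, hstar⟩ := mem_adm_Γstar_iff.1 hρ
  calc (Fintype.card V : ℝ)
      = ∑ _v : V, 1 := by simp
    _ ≤ ∑ v, ∑ e ∈ G.incidenceFinset v, ρ e := Finset.sum_le_sum fun v _ => hstar v
    _ = 2 * ∑ e ∈ G.edgeFinset, ρ e := by rw [sum_sum_incidenceFinset, nsmul_eq_mul, Nat.cast_two]

theorem card_edgeFinset_mul_inv_rpow_le_energy (hdeg : ∀ v, G.degree v ≤ d) (hp : 1 ≤ p)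
    (hρ : ρ ∈ Adm G (Γstar G)) :
    #G.edgeFinset * (d : ℝ)⁻¹ ^ p ≤ energy p (fun _ => 1) G ρ := by
  have hnonneg : ∀ e, 0 ≤ ρ e := (mem_adm_Γstar_iff.1 hρ).1
  have hcard : 2 * (#G.edgeFinset : ℝ) ≤ Fintype.card V * d := by
    exact_mod_cast two_mul_card_edgeFinset_le hdeg
  have hedges : (#G.edgeFinset : ℝ) ≤ (∑ e ∈ G.edgeFinset, ρ e) * d := by
    have := mul_le_mul_of_nonneg_right (card_le_two_mul_sum_of_mem_adm_Γstar hρ) d.cast_nonneg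
    linarith
  have hmean : #G.edgeFinset * (d : ℝ)⁻¹ ≤ ∑ e ∈ G.edgeFinset, ρ e := by
    rw [← div_eq_mul_inv]
    exact div_le_of_le_mul₀ d.cast_nonneg (Finset.sum_nonneg fun e _ => hnonneg e) hedges
  rw [energy_one_eq_sum_rpow]
  exact card_mul_rpow_le_sum_rpow hp (by positivity) (fun e _ => hnonneg e) hmean

end

theorem mod_star_regular_general [Fintype V] [DecidableEq V] (G : SimpleGraph V)
    [DecidableRel G.Adj] (d : ℕ) (hd : 1 ≤ d) (hreg : G.IsRegularOfDegree d)
    (p : ℝ) (hp : 1 ≤ p) :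
    (fun e => if e ∈ G.edgeFinset then ((d : ℝ))⁻¹ else 0) ∈ Adm G (Γstar G) ∧
    energy p (fun _ => 1) G (fun e => if e ∈ G.edgeFinset then ((d : ℝ))⁻¹ else 0)
      = Modulus p (fun _ => 1) G (Γstar G) ∧
    Modulus p (fun _ => 1) G (Γstar G) = (G.edgeFinset.card : ℝ) / (d : ℝ) ^ p := by
  have hadm : (fun e => if e ∈ G.edgeFinset then ((d : ℝ))⁻¹ else 0) ∈ Adm G (Γstar G) :=
    edgeFinset_ite_mem_adm_Γstar (by positivity) fun v => by
      rw [hreg.degree_eq v, mul_inv_cancel₀ (by positivity)]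
  have hmod : Modulus p (fun _ => 1) G (Γstar G) = #G.edgeFinset * (d : ℝ)⁻¹ ^ p := by
    refine IsLeast.csInf_eq ⟨⟨_, hadm, energy_one_edgeFinset_ite⟩, ?_⟩
    rintro _ ⟨ρ, hρ, rfl⟩
    exact card_edgeFinset_mul_inv_rpow_le_energy (fun v => (hreg.degree_eq v).le) hp hρ
  refine ⟨hadm, energy_one_edgeFinset_ite.trans hmod.symm, ?_⟩
  rw [hmod, Real.inv_rpow d.cast_nonneg, div_eq_mul_inv]

/-- For an unweighted `d`-regular graph and `1 < p < ∞`, the constant density `ρ ≡ 1/d`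
is extremal for the star modulus and `Mod_p(Γ_star) = |E| / d^p`. -/
theorem mod_star_regular [Fintype V] [DecidableEq V] (G : SimpleGraph V)
    [DecidableRel G.Adj] (d : ℕ) (hd : 1 ≤ d) (hreg : G.IsRegularOfDegree d)
    (p : ℝ) (hp : 1 < p) :
    (fun e => if e ∈ G.edgeFinset then ((d : ℝ))⁻¹ else 0) ∈ Adm G (Γstar G) ∧
    energy p (fun _ => 1) G (fun e => if e ∈ G.edgeFinset then ((d : ℝ))⁻¹ else 0)
      = Modulus p (fun _ => 1) G (Γstar G) ∧
    Modulus p (fun _ => 1) G (Γstar G) = (G.edgeFinset.card : ℝ) / (d : ℝ) ^ p :=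
  mod_star_regular_general G d hd hreg p hp.le
end
end

section
/- Let G = W_n be the unweighted wheel graph on n ≥ 6 vertices (a hub vertex v adjacent to all n−1 rim vertices, which form a cycle of length n−1), and let Γ_star be the family of stars of W_n. Then the density ρ_0 with ρ_0(e) = 1/5 on the spoke edges (edges incident to the hub) and ρ_0(e) = 2/5 on the rim edges is extremal, and Mod_2(Γ_star) = (n−1)/5. -/
open Finset

noncomputable section
open scoped Classical

variable {V : Type*}

/-- The wheel graph on `Fin n`: the hub `0` is adjacent to all rim vertices
`1, …, n-1`, which form a cycle `1 — 2 — ⋯ — (n-1) — 1`. -/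
def wheelGraph (n : ℕ) [NeZero n] : SimpleGraph (Fin n) :=
  SimpleGraph.fromRel fun u v =>
    u = 0 ∨ (v : ℕ) = (u : ℕ) + 1 ∨ ((u : ℕ) = n - 1 ∧ (v : ℕ) = 1)

/-!
Let `ρ₀ = ∑ i, w i • γ i` be a nonnegative combination of members of `Γ`. Pairing it with an
admissible `ρ` gives `∑ i, w i ≤ ⟨ρ₀, ρ⟩`, with equality at `ρ = ρ₀` if every `γ i` of nonzero
weight has `ρ₀`-length `1`. Then `‖ρ₀‖² = ∑ i, w i`, and `2 ⟨ρ₀, ρ⟩ ≤ ‖ρ₀‖² + ‖ρ‖²` yields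
`‖ρ₀‖² ≤ ‖ρ‖²`, so `ρ₀` is extremal as soon as it is admissible. For the wheel, weight `1/5` on the
rim stars and `0` on the hub star produces `1/5` on spokes and `2/5` on rim edges; a rim star then
has length `1/5 + 2/5 + 2/5 = 1`, and the hub star has length `(n - 1) / 5`, which is at least `1`
exactly when `n ≥ 6`.
-/

section Multipliers

variable [Fintype V] {ι : Type*} [Fintype ι] {G : SimpleGraph V} {Γ : Set (Sym2 V → ℝ)}
  {γ : ι → Sym2 V → ℝ} {w : ι → ℝ}

/-- The `ρ`-length `ℓ_ρ(γ) = ∑ e, γ(e) ρ(e)` of an object with usage vector `γ`. It is symmetric in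
`γ` and `ρ`, and also serves as the inner product of two densities. -/
def rhoLength (G : SimpleGraph V) (γ ρ : Sym2 V → ℝ) : ℝ :=
  ∑ e ∈ G.edgeFinset, γ e * ρ e

lemma rhoLength_sum_smul (G : SimpleGraph V) (w : ι → ℝ) (γ : ι → Sym2 V → ℝ) (ρ : Sym2 V → ℝ) :
    rhoLength G (∑ i, w i • γ i) ρ = ∑ i, w i * rhoLength G (γ i) ρ := by
  simp only [rhoLength, Finset.sum_apply, Pi.smul_apply, smul_eq_mul, sum_mul, mul_sum, mul_assoc]
  exact sum_comm

variable [DecidableEq V]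

lemma rhoLength_self (G : SimpleGraph V) (ρ : Sym2 V → ℝ) : rhoLength G ρ ρ = energy2 G ρ :=
  sum_congr rfl fun e _ => (sq (ρ e)).symm

lemma two_mul_rhoLength_le (G : SimpleGraph V) (ρ₀ ρ : Sym2 V → ℝ) :
    2 * rhoLength G ρ₀ ρ ≤ energy2 G ρ₀ + energy2 G ρ := by
  simp only [rhoLength, energy2, mul_sum, ← sum_add_distrib, ← mul_assoc]
  exact sum_le_sum fun e _ => two_mul_le_add_sq (ρ₀ e) (ρ e)

lemma energy2_sum_smul (hslack : ∀ i, w i * rhoLength G (γ i) (∑ j, w j • γ j) = w i) :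
    energy2 G (∑ i, w i • γ i) = ∑ i, w i := by
  rw [← rhoLength_self, rhoLength_sum_smul]
  exact sum_congr rfl fun i _ => hslack i

lemma sum_le_rhoLength_sum_smul (hγ : ∀ i, γ i ∈ Γ) (hw : ∀ i, 0 ≤ w i) {ρ : Sym2 V → ℝ}
    (hρ : ρ ∈ Adm G Γ) : ∑ i, w i ≤ rhoLength G (∑ i, w i • γ i) ρ := by
  rw [rhoLength_sum_smul]
  exact sum_le_sum fun i _ => le_mul_of_one_le_right (hw i) (hρ.2.2 (γ i) (hγ i))

theorem isLeast_energy2_of_multipliers (hγ : ∀ i, γ i ∈ Γ) (hw : ∀ i, 0 ≤ w i)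
    (hadm : ∑ i, w i • γ i ∈ Adm G Γ)
    (hslack : ∀ i, w i * rhoLength G (γ i) (∑ j, w j • γ j) = w i) :
    IsLeast (energy2 G '' Adm G Γ) (∑ i, w i) := by
  have henergy := energy2_sum_smul hslack
  refine ⟨⟨_, hadm, henergy⟩, ?_⟩
  rintro _ ⟨ρ, hρ, rfl⟩
  have hpairing := sum_le_rhoLength_sum_smul hγ hw hρ
  have hyoung := two_mul_rhoLength_le G (∑ i, w i • γ i) ρ
  linarith

end Multipliers

section Stars

variable [Fintype V] [DecidableEq V] {G : SimpleGraph V} {w : V → ℝ} {u v : V}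

/-- The indicator vector `1_{δ(u)}` of the star of `u`, as it occurs in `Γstar`. -/
def starIndicator (G : SimpleGraph V) (u : V) : Sym2 V → ℝ :=
  fun e => if e ∈ G.incidenceFinset u then 1 else 0

/-- The density `∑ u, w(u) 1_{δ(u)}` generated by the vertex weights `w`. -/
def starDensity (G : SimpleGraph V) (w : V → ℝ) : Sym2 V → ℝ :=
  ∑ u, w u • starIndicator G u

lemma starIndicator_mem_Γstar (G : SimpleGraph V) (u : V) : starIndicator G u ∈ Γstar G :=
  ⟨u, rfl⟩

lemma starDensity_apply (G : SimpleGraph V) (w : V → ℝ) (e : Sym2 V) :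
    starDensity G w e = ∑ u with e ∈ G.incidenceFinset u, w u := by
  simp only [starDensity, starIndicator, Finset.sum_apply, Pi.smul_apply, smul_eq_mul, mul_ite,
    mul_one, mul_zero, sum_filter]

lemma starDensity_of_adj (h : G.Adj u v) : starDensity G w s(u, v) = w u + w v := by
  have hends : ({x | s(u, v) ∈ G.incidenceFinset x} : Finset V) = {u, v} := by
    ext x
    simp [SimpleGraph.incidenceFinset_eq_filter, h]
  rw [starDensity_apply, hends, sum_pair h.ne]

lemma starDensity_of_notMem_edgeSet {e : Sym2 V} (he : e ∉ G.edgeSet) :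
    starDensity G w e = 0 := by
  simp [starDensity_apply, SimpleGraph.incidenceFinset_eq_filter, he]

lemma starDensity_nonneg (hw : ∀ u, 0 ≤ w u) (e : Sym2 V) : 0 ≤ starDensity G w e := by
  rw [starDensity_apply]
  exact sum_nonneg fun u _ => hw u

lemma incidenceFinset_eq_image_neighborFinset (G : SimpleGraph V) (u : V) :
    G.incidenceFinset u = (G.neighborFinset u).image (s(u, ·)) := by
  ext e
  induction e with | _ x y => ?_
  simp only [SimpleGraph.mem_incidenceFinset, SimpleGraph.mk'_mem_incidenceSet_iff, mem_image,
    SimpleGraph.mem_neighborFinset]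
  grind [SimpleGraph.adj_comm, Sym2.eq_iff]

lemma rhoLength_starIndicator (G : SimpleGraph V) (u : V) (ρ : Sym2 V → ℝ) :
    rhoLength G (starIndicator G u) ρ = ∑ v ∈ G.neighborFinset u, ρ s(u, v) := by
  calc rhoLength G (starIndicator G u) ρ
      = ∑ e ∈ G.incidenceFinset u, ρ e := by
        simp only [rhoLength, starIndicator, ite_mul, one_mul, zero_mul, sum_ite_mem,
          inter_eq_right.mpr (G.incidenceFinset_subset u)]
    _ = ∑ v ∈ G.neighborFinset u, ρ s(u, v) := by
        rw [incidenceFinset_eq_image_neighborFinset,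
          sum_image fun _ _ _ _ h => Sym2.congr_right.mp h]

lemma rhoLength_starIndicator_starDensity (G : SimpleGraph V) (w : V → ℝ) (u : V) :
    rhoLength G (starIndicator G u) (starDensity G w) = ∑ v ∈ G.neighborFinset u, (w u + w v) := by
  rw [rhoLength_starIndicator]
  exact sum_congr rfl fun v hv => starDensity_of_adj ((G.mem_neighborFinset u v).mp hv)

lemma starDensity_mem_Adm (hw : ∀ u, 0 ≤ w u)
    (hlength : ∀ u, 1 ≤ ∑ v ∈ G.neighborFinset u, (w u + w v)) :
    starDensity G w ∈ Adm G (Γstar G) := by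
  refine ⟨starDensity_nonneg hw, fun _ => starDensity_of_notMem_edgeSet, ?_⟩
  rintro _ ⟨u, rfl⟩
  exact (hlength u).trans_eq (rhoLength_starIndicator_starDensity G w u).symm

theorem starDensity_extremal (hw : ∀ u, 0 ≤ w u)
    (hlength : ∀ u, 1 ≤ ∑ v ∈ G.neighborFinset u, (w u + w v))
    (hslack : ∀ u, w u ≠ 0 → ∑ v ∈ G.neighborFinset u, (w u + w v) = 1) :
    energy2 G (starDensity G w) = Mod2 G (Γstar G) ∧ Mod2 G (Γstar G) = ∑ u, w u := by
  have hslack' (u : V) : w u * rhoLength G (starIndicator G u) (starDensity G w) = w u := by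
    rcases eq_or_ne (w u) 0 with hu | hu
    · rw [hu, zero_mul]
    · rw [rhoLength_starIndicator_starDensity, hslack u hu, mul_one]
  have hmod : Mod2 G (Γstar G) = ∑ u, w u :=
    (isLeast_energy2_of_multipliers (starIndicator_mem_Γstar G) hw
      (starDensity_mem_Adm hw hlength) hslack').csInf_eq
  exact ⟨(energy2_sum_smul hslack').trans hmod.symm, hmod⟩

end Stars

section Wheel

variable {n : ℕ} [NeZero n]

/-- Vertex weights on the wheel that generate its extremal density: `0` at the hub, `1/5` on the
rim. -/
def rimWeight (u : Fin n) : ℝ :=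
  if u = 0 then 0 else 1 / 5

/-- The density equal to `1/5` on the spokes and `2/5` on the rim edges of the wheel. -/
def wheelDensity (n : ℕ) [NeZero n] : Sym2 (Fin n) → ℝ :=
  fun e => if e ∈ (wheelGraph n).edgeFinset then (if 0 ∈ e then 1 / 5 else 2 / 5) else 0

lemma rimWeight_nonneg (u : Fin n) : 0 ≤ rimWeight u := by
  unfold rimWeight
  positivity

lemma sum_rimWeight (n : ℕ) [NeZero n] : ∑ u : Fin n, rimWeight u = ((n : ℝ) - 1) / 5 := by
  simp only [rimWeight, sum_ite, sum_const_zero, filter_ne', sum_const, mem_univ,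
    card_erase_of_mem, card_univ, Fintype.card_fin, nsmul_eq_mul, Nat.cast_pred (NeZero.pos n)]
  ring

lemma wheelDensity_eq_starDensity (n : ℕ) [NeZero n] :
    wheelDensity n = starDensity (wheelGraph n) rimWeight := by
  ext e
  by_cases he : e ∈ (wheelGraph n).edgeSet
  · induction e with | _ u v => ?_
    have hadj : (wheelGraph n).Adj u v := he
    have hne : u ≠ v := hadj.ne
    rw [starDensity_of_adj hadj]
    grind [wheelDensity, rimWeight, SimpleGraph.mem_edgeFinset]
  · rw [starDensity_of_notMem_edgeSet he]
    simp [wheelDensity, he]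

lemma wheelGraph_adj_iff (u v : Fin n) :
    (wheelGraph n).Adj u v ↔ u ≠ v ∧
      ((u = 0 ∨ (v : ℕ) = u + 1 ∨ ((u : ℕ) = n - 1 ∧ (v : ℕ) = 1)) ∨
        (v = 0 ∨ (u : ℕ) = v + 1 ∨ ((v : ℕ) = n - 1 ∧ (u : ℕ) = 1))) :=
  SimpleGraph.fromRel_adj _ u v

lemma neighborFinset_wheelGraph_hub (n : ℕ) [NeZero n] :
    (wheelGraph n).neighborFinset 0 = univ.erase 0 := by
  ext v
  simp [wheelGraph_adj_iff, eq_comm]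

lemma exists_neighborFinset_wheelGraph_rim (hn : 4 ≤ n) {u : Fin n} (hu : u ≠ 0) :
    ∃ a b : Fin n, a ≠ 0 ∧ b ≠ 0 ∧ a ≠ b ∧ (wheelGraph n).neighborFinset u = {0, a, b} := by
  have hu₀ : (u : ℕ) ≠ 0 := Fin.val_ne_zero_iff.mpr hu
  let next : Fin n := ⟨if (u : ℕ) = n - 1 then 1 else u + 1, by grind⟩
  let prev : Fin n := ⟨if (u : ℕ) = 1 then n - 1 else u - 1, by grind⟩
  refine ⟨next, prev, ?_, ?_, ?_, ?_⟩
  · grind [Fin.ext_iff, Fin.val_zero]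
  · grind [Fin.ext_iff, Fin.val_zero]
  · grind [Fin.ext_iff]
  · ext v
    simp only [SimpleGraph.mem_neighborFinset, wheelGraph_adj_iff, mem_insert, mem_singleton]
    grind [Fin.ext_iff, Fin.val_zero]

lemma sum_rimWeight_star_hub (n : ℕ) [NeZero n] :
    ∑ v ∈ (wheelGraph n).neighborFinset 0, (rimWeight (0 : Fin n) + rimWeight v) =
      ((n : ℝ) - 1) / 5 := by
  have hhub : rimWeight (0 : Fin n) = 0 := if_pos rfl
  rw [neighborFinset_wheelGraph_hub, ← sum_rimWeight, ← sum_erase univ hhub]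
  simp only [hhub, zero_add]

lemma sum_rimWeight_star_rim (hn : 4 ≤ n) {u : Fin n} (hu : u ≠ 0) :
    ∑ v ∈ (wheelGraph n).neighborFinset u, (rimWeight u + rimWeight v) = 1 := by
  obtain ⟨a, b, ha, hb, hab, hN⟩ := exists_neighborFinset_wheelGraph_rim hn hu
  rw [hN, sum_insert (by simp [ha.symm, hb.symm]), sum_pair hab]
  simp only [rimWeight, hu, ha, hb, if_true, if_false]
  norm_num

end Wheel

/-- For the wheel graph `W_n`, `n ≥ 6`: the density equal to `1/5` on the spokes and
`2/5` on the rim is extremal for the star modulus, and `Mod_2(Γ_star) = (n-1)/5`. -/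
theorem mod2_wheelGraph (n : ℕ) [NeZero n] (hn : 6 ≤ n) :
    (fun e => if e ∈ (wheelGraph n).edgeFinset then
        (if (0 : Fin n) ∈ e then (1 / 5 : ℝ) else 2 / 5) else 0)
      ∈ Adm (wheelGraph n) (Γstar (wheelGraph n)) ∧
    energy2 (wheelGraph n) (fun e => if e ∈ (wheelGraph n).edgeFinset then
        (if (0 : Fin n) ∈ e then (1 / 5 : ℝ) else 2 / 5) else 0)
      = Mod2 (wheelGraph n) (Γstar (wheelGraph n)) ∧
    Mod2 (wheelGraph n) (Γstar (wheelGraph n)) = ((n : ℝ) - 1) / 5 := by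
  have hlength (u : Fin n) :
      1 ≤ ∑ v ∈ (wheelGraph n).neighborFinset u, (rimWeight u + rimWeight v) := by
    rcases eq_or_ne u 0 with rfl | hu
    · have hn' : (6 : ℝ) ≤ n := by exact_mod_cast hn
      rw [sum_rimWeight_star_hub]
      linarith
    · exact (sum_rimWeight_star_rim (by lia) hu).ge
  have hslack (u : Fin n) (hu : rimWeight u ≠ 0) :
      ∑ v ∈ (wheelGraph n).neighborFinset u, (rimWeight u + rimWeight v) = 1 :=
    sum_rimWeight_star_rim (by lia) fun h => hu (if_pos h)
  change wheelDensity n ∈ _ ∧ energy2 _ (wheelDensity n) = _ ∧ _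
  rw [wheelDensity_eq_starDensity, ← sum_rimWeight]
  exact ⟨starDensity_mem_Adm rimWeight_nonneg hlength,
    starDensity_extremal rimWeight_nonneg hlength hslack⟩
end
end
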